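/- arXiv:2502.09453 — 2 statements merged into one kernel-verified Lean document; each statement's English description precedes it below -/
import Mathlib

section
/- For every finite simple graph G = (V,E) with at least one vertex, the recursive teaching dimension of the star class satisfies Δ(G) ≤ RTD(C_star(G)) ≤ Δ(G) + 1. -/
open scoped Classical

noncomputable section

/-! ### Concept classes, VC-dimension, teaching dimension, RTD -/

variable {X : Type*}

/-- A set `S` is shattered by the concept class `𝒞` if every subset of `S`
is the trace on `S` of some concept in `𝒞`. -/
def Shatters [DecidableEq X] (𝒞 : Finset (Finset X)) (S : Finset X) : Prop :=
  ∀ S' ⊆ S, ∃ C ∈ 𝒞, C ∩ S = S'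

/-- The VC-dimension of a concept class: the maximum size of a shattered set. -/
def VCD [DecidableEq X] (𝒞 : Finset (Finset X)) : ℕ :=
  sSup {n | ∃ S : Finset X, Shatters 𝒞 S ∧ S.card = n}

/-- `D` is a teaching set for the concept `C` within the class `𝒞`:
no other concept of `𝒞` agrees with `C` on all of `D`. -/
def IsTeachingSet [DecidableEq X] (𝒞 : Finset (Finset X)) (C D : Finset X) : Prop :=
  ∀ C' ∈ 𝒞, C' ≠ C → ∃ x ∈ D, ¬ ((x ∈ C') ↔ (x ∈ C))

/-- The teaching dimension of the concept `C` within the class `𝒞`: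
the minimum size of a teaching set for `C` in `𝒞`. -/
def TD [DecidableEq X] (𝒞 : Finset (Finset X)) (C : Finset X) : ℕ :=
  sInf {n | ∃ D : Finset X, IsTeachingSet 𝒞 C D ∧ D.card = n}

/-- The minimum teaching dimension over all concepts of the class. -/
def TDmin [DecidableEq X] (𝒞 : Finset (Finset X)) : ℕ :=
  sInf {n | ∃ C ∈ 𝒞, TD 𝒞 C = n}

/-- The recursive teaching dimension: with `𝒞_min` the set of concepts of `𝒞` whose
teaching dimension equals `TDmin 𝒞`, we have `RTD 𝒞 = TDmin 𝒞` if `𝒞 = 𝒞_min`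
and `RTD 𝒞 = max (TDmin 𝒞) (RTD (𝒞 \ 𝒞_min))` otherwise. -/
def RTD [DecidableEq X] (𝒞 : Finset (Finset X)) : ℕ :=
  if h : 𝒞 = 𝒞.filter (fun C => TD 𝒞 C = TDmin 𝒞) then TDmin 𝒞
  else max (TDmin 𝒞) (RTD (𝒞 \ 𝒞.filter (fun C => TD 𝒞 C = TDmin 𝒞)))
termination_by 𝒞.card
decreasing_by
  have hne : 𝒞.Nonempty := by
    rcases Finset.eq_empty_or_nonempty 𝒞 with he | hne
    · exact absurd (by simp [he]) h
    · exact hne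
  obtain ⟨C₀, hC₀⟩ := hne
  have hmem : TDmin 𝒞 ∈ {n | ∃ C ∈ 𝒞, TD 𝒞 C = n} :=
    Nat.sInf_mem ⟨TD 𝒞 C₀, C₀, hC₀, rfl⟩
  obtain ⟨C, hC, hTD⟩ := hmem
  refine Finset.card_lt_card ?_
  refine (Finset.ssubset_iff_of_subset Finset.sdiff_subset).mpr ?_
  exact ⟨C, hC, by simp [Finset.mem_sdiff, Finset.mem_filter, hC, hTD]⟩

/-! ### Graph-theoretic notions -/

/-- The degree of a vertex in a graph on a finite vertex type. -/
def deg {W : Type*} [Fintype W] (T : SimpleGraph W) (v : W) : ℕ :=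
  (Finset.univ.filter (fun w => T.Adj v w)).card

/-- A leaf of a graph (in particular, of a tree) is a vertex of degree 1. -/
def IsLeaf {W : Type*} [Fintype W] (T : SimpleGraph W) (v : W) : Prop :=
  deg T v = 1

/-- The number of leaves of a graph (in particular, of a tree). -/
def leafCount {W : Type*} [Fintype W] (T : SimpleGraph W) : ℕ :=
  (Finset.univ.filter (fun v => IsLeaf T v)).card

variable {V : Type*} [Fintype V] [DecidableEq V]

/-- The open neighborhood of a vertex, as a finset. -/
def nbrFinset (G : SimpleGraph V) (x : V) : Finset V :=
  Finset.univ.filter (fun y => G.Adj x y)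

/-- The closed neighborhood of a vertex, as a finset. -/
def closedNbr (G : SimpleGraph V) (x : V) : Finset V :=
  insert x (nbrFinset G x)

/-- The maximum degree `Δ(G)`. -/
def maxDeg (G : SimpleGraph V) : ℕ :=
  Finset.univ.sup (deg G)

/-- The closed neighborhood of a set of vertices. -/
def closedNbrSet (G : SimpleGraph V) (A : Finset V) : Finset V :=
  A.biUnion (closedNbr G)

/-- The open neighborhood of a set of vertices: `N_G(A) \ A`. -/
def openNbrSet (G : SimpleGraph V) (A : Finset V) : Finset V :=
  closedNbrSet G A \ A

/-- The star class of `G`: all sets `{x} ∪ X` with `X` a set of neighbors of `x`. -/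
def Cstar (G : SimpleGraph V) : Finset (Finset V) :=
  Finset.univ.filter (fun C => ∃ x : V, ∃ Y ⊆ nbrFinset G x, C = insert x Y)

/-- `A` is a connected set of `G`: the induced subgraph `G[A]` is connected. -/
def IsConnSet (G : SimpleGraph V) (A : Finset V) : Prop :=
  (G.induce (A : Set V)).Connected

/-- The class of connected sets of `G` (including the empty set). -/
def Ccon (G : SimpleGraph V) : Finset (Finset V) :=
  Finset.univ.filter (fun A => A = ∅ ∨ IsConnSet G A)

/-- For connected `G`: the maximum number of leaves over all spanning trees of `G`. -/
def ell (G : SimpleGraph V) : ℕ :=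
  sSup {k | ∃ T : SimpleGraph V, T ≤ G ∧ T.IsTree ∧ leafCount T = k}

/-- For a general graph `G`: the maximum of `ell` over the connected components of `G`. -/
def ellGen (G : SimpleGraph V) : ℕ :=
  sSup {k | ∃ c : G.ConnectedComponent, ell (G.induce c.supp) = k}

/-- Every pair of distinct elements of `L` can be connected by a path in `G` which
contains neither `u` nor any element of `L` other than the two endpoints. -/
def ConnectableAvoiding (G : SimpleGraph V) (L : Set V) (u : V) : Prop :=
  ∀ a ∈ L, ∀ b ∈ L, a ≠ b → ∃ p : G.Walk a b, p.IsPath ∧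
    ∀ v ∈ p.support, v ≠ u ∧ (v ∈ L → v = a ∨ v = b)

end

/-!
Removing the most easily taught concepts layer by layer shows that `RTD 𝒞` is the maximum of
`TDmin 𝒟` over all subclasses `𝒟 ⊆ 𝒞`.

For the lower bound, the stars with a fixed center `x` form a cube: any neighbor of `x` can be
flipped in or out of a star without leaving the subclass, so every teaching set must contain the
whole open neighborhood of `x`. For the upper bound, an inclusion-maximal concept of a subclass is
taught by its own elements, and a star has at most `Δ(G) + 1` elements.
-/

section ConceptClass

open scoped symmDiff

variable {X : Type*} [DecidableEq X] {𝒞 𝒟 : Finset (Finset X)} {A B C D S : Finset X}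

theorem IsTeachingSet.anti (h𝒟 : 𝒟 ⊆ 𝒞) (hD : IsTeachingSet 𝒞 C D) : IsTeachingSet 𝒟 C D :=
  fun C' hC' => hD C' (h𝒟 hC')

theorem isTeachingSet_biUnion_symmDiff (𝒞 : Finset (Finset X)) (C : Finset X) :
    IsTeachingSet 𝒞 C (𝒞.biUnion (· ∆ C)) := by
  intro C' hC' hne
  obtain ⟨x, hx⟩ : (C' ∆ C).Nonempty := Finset.symmDiff_nonempty.2 hne
  refine ⟨x, Finset.mem_biUnion.2 ⟨C', hC', hx⟩, ?_⟩
  rw [Finset.mem_symmDiff] at hx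
  tauto

theorem exists_isTeachingSet_card_eq_td (𝒞 : Finset (Finset X)) (C : Finset X) :
    ∃ D, IsTeachingSet 𝒞 C D ∧ D.card = TD 𝒞 C :=
  Nat.sInf_mem (s := {n | ∃ D, IsTeachingSet 𝒞 C D ∧ D.card = n})
    ⟨_, _, isTeachingSet_biUnion_symmDiff 𝒞 C, rfl⟩

theorem IsTeachingSet.td_le_card (hD : IsTeachingSet 𝒞 C D) : TD 𝒞 C ≤ D.card :=
  Nat.sInf_le ⟨D, hD, rfl⟩

theorem td_mono (h𝒟 : 𝒟 ⊆ 𝒞) : TD 𝒟 C ≤ TD 𝒞 C := by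
  obtain ⟨D, hD, hcard⟩ := exists_isTeachingSet_card_eq_td 𝒞 C
  exact hcard ▸ (hD.anti h𝒟).td_le_card

theorem tdmin_le_td (hC : C ∈ 𝒞) : TDmin 𝒞 ≤ TD 𝒞 C :=
  Nat.sInf_le ⟨C, hC, rfl⟩

theorem exists_td_eq_tdmin (h𝒞 : 𝒞.Nonempty) : ∃ C ∈ 𝒞, TD 𝒞 C = TDmin 𝒞 :=
  Nat.sInf_mem (s := {n | ∃ C ∈ 𝒞, TD 𝒞 C = n}) <| h𝒞.elim fun C hC => ⟨_, C, hC, rfl⟩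

theorem tdmin_empty : TDmin (∅ : Finset (Finset X)) = 0 := by
  simp [TDmin]

theorem rtd_empty : RTD (∅ : Finset (Finset X)) = 0 := by
  rw [RTD, dif_pos (Finset.filter_empty _).symm, tdmin_empty]

/-- The layer `𝒞_min` of most easily taught concepts, which is peeled off `𝒞` in one step of the
recursion defining `RTD`. -/
noncomputable def easiestConcepts (𝒞 : Finset (Finset X)) : Finset (Finset X) :=
  𝒞.filter fun C => TD 𝒞 C = TDmin 𝒞

theorem sdiff_easiestConcepts_ssubset (h𝒞 : 𝒞.Nonempty) : 𝒞 \ easiestConcepts 𝒞 ⊂ 𝒞 := by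
  obtain ⟨C, hC, htd⟩ := exists_td_eq_tdmin h𝒞
  exact Finset.sdiff_ssubset (Finset.filter_subset _ _) ⟨C, Finset.mem_filter.2 ⟨hC, htd⟩⟩

theorem rtd_eq_max (𝒞 : Finset (Finset X)) :
    RTD 𝒞 = max (TDmin 𝒞) (RTD (𝒞 \ easiestConcepts 𝒞)) := by
  rw [RTD, ← easiestConcepts]
  split_ifs with h
  · rw [← h, Finset.sdiff_self, rtd_empty, max_eq_left (Nat.zero_le _)]
  · rfl

theorem tdmin_le_or_subset_sdiff_easiestConcepts (h𝒟 : 𝒟 ⊆ 𝒞) :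
    TDmin 𝒟 ≤ TDmin 𝒞 ∨ 𝒟 ⊆ 𝒞 \ easiestConcepts 𝒞 := by
  by_cases hdisj : Disjoint 𝒟 (easiestConcepts 𝒞)
  · exact .inr (Finset.subset_sdiff.2 ⟨h𝒟, hdisj⟩)
  · obtain ⟨C, hC𝒟, hC⟩ := Finset.not_disjoint_iff.1 hdisj
    left
    calc TDmin 𝒟 ≤ TD 𝒟 C := tdmin_le_td hC𝒟
      _ ≤ TD 𝒞 C := td_mono h𝒟
      _ = TDmin 𝒞 := (Finset.mem_filter.1 hC).2

theorem rtd_eq_sup_tdmin (𝒞 : Finset (Finset X)) : RTD 𝒞 = 𝒞.powerset.sup TDmin := by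
  induction 𝒞 using Finset.strongInduction with
  | H 𝒞 ih =>
    rcases 𝒞.eq_empty_or_nonempty with rfl | h𝒞
    · rw [rtd_empty, Finset.powerset_empty, Finset.sup_singleton, tdmin_empty]
    rw [rtd_eq_max, ih _ (sdiff_easiestConcepts_ssubset h𝒞)]
    apply le_antisymm
    · exact max_le (Finset.le_sup (Finset.mem_powerset_self 𝒞))
        (Finset.sup_mono (Finset.powerset_mono.2 Finset.sdiff_subset))
    · refine Finset.sup_le fun 𝒟 h𝒟 => ?_
      rcases tdmin_le_or_subset_sdiff_easiestConcepts (Finset.mem_powerset.1 h𝒟) with hle | hsub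
      · exact le_max_of_le_left hle
      · exact le_max_of_le_right (Finset.le_sup (Finset.mem_powerset.2 hsub))

theorem tdmin_le_rtd_of_subset (h𝒟 : 𝒟 ⊆ 𝒞) : TDmin 𝒟 ≤ RTD 𝒞 :=
  rtd_eq_sup_tdmin 𝒞 ▸ Finset.le_sup (Finset.mem_powerset.2 h𝒟)

theorem IsTeachingSet.mem_of_symmDiff_singleton_mem {x : X} (hD : IsTeachingSet 𝒞 C D)
    (hx : C ∆ {x} ∈ 𝒞) : x ∈ D := by
  have hne : C ∆ {x} ≠ C := by simp
  obtain ⟨y, hyD, hy⟩ := hD _ hx hne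
  obtain rfl : y = x := by
    by_contra hyx
    simp [Finset.mem_symmDiff, hyx] at hy
  exact hyD

theorem card_le_tdmin_of_symmDiff_singleton_mem (h𝒞 : 𝒞.Nonempty)
    (hS : ∀ C ∈ 𝒞, ∀ x ∈ S, C ∆ {x} ∈ 𝒞) : S.card ≤ TDmin 𝒞 := by
  obtain ⟨C, hC, htd⟩ := exists_td_eq_tdmin h𝒞
  obtain ⟨D, hD, hcard⟩ := exists_isTeachingSet_card_eq_td 𝒞 C
  have hSD : S ⊆ D := fun x hx => hD.mem_of_symmDiff_singleton_mem (hS C hC x hx)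
  exact htd ▸ hcard ▸ Finset.card_le_card hSD

theorem symmDiff_singleton_mem_Icc {x : X} (hC : C ∈ Finset.Icc A B) (hx : x ∈ B \ A) :
    C ∆ {x} ∈ Finset.Icc A B := by
  simp only [Finset.mem_Icc, Finset.subset_iff, Finset.mem_symmDiff, Finset.mem_singleton,
    Finset.mem_sdiff] at *
  grind

theorem card_sdiff_le_rtd_of_Icc_subset (hAB : A ⊆ B) (hsub : Finset.Icc A B ⊆ 𝒞) :
    (B \ A).card ≤ RTD 𝒞 :=
  calc (B \ A).card ≤ TDmin (Finset.Icc A B) :=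
        card_le_tdmin_of_symmDiff_singleton_mem (Finset.nonempty_Icc.2 hAB)
          fun _ hC _ hx => symmDiff_singleton_mem_Icc hC hx
    _ ≤ RTD 𝒞 := tdmin_le_rtd_of_subset hsub

theorem isTeachingSet_self_of_maximal (hC : Maximal (· ∈ 𝒞) C) : IsTeachingSet 𝒞 C C := by
  intro C' hC' hne
  by_contra! hagree
  have hsub : C ⊆ C' := fun x hx => (hagree x hx).2 hx
  exact hne (hC.eq_of_le hC' hsub).symm

theorem tdmin_le_sup_card (𝒞 : Finset (Finset X)) : TDmin 𝒞 ≤ 𝒞.sup Finset.card := by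
  rcases 𝒞.eq_empty_or_nonempty with rfl | h𝒞
  · exact tdmin_empty.trans_le (Nat.zero_le _)
  · obtain ⟨C, hC⟩ := 𝒞.exists_maximal h𝒞
    calc TDmin 𝒞 ≤ TD 𝒞 C := tdmin_le_td hC.prop
      _ ≤ C.card := (isTeachingSet_self_of_maximal hC).td_le_card
      _ ≤ 𝒞.sup Finset.card := Finset.le_sup hC.prop

theorem rtd_le_sup_card (𝒞 : Finset (Finset X)) : RTD 𝒞 ≤ 𝒞.sup Finset.card := by
  rw [rtd_eq_sup_tdmin]
  exact Finset.sup_le fun 𝒟 h𝒟 =>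
    (tdmin_le_sup_card 𝒟).trans (Finset.sup_mono (Finset.mem_powerset.1 h𝒟))

end ConceptClass

section StarClass

variable {V : Type*} [Fintype V]

theorem notMem_nbrFinset_self (G : SimpleGraph V) (x : V) : x ∉ nbrFinset G x := by
  simp [nbrFinset]

variable [DecidableEq V]

theorem closedNbr_sdiff_singleton (G : SimpleGraph V) (x : V) :
    closedNbr G x \ {x} = nbrFinset G x := by
  rw [closedNbr, Finset.sdiff_singleton_eq_erase, Finset.erase_insert (notMem_nbrFinset_self G x)]

theorem card_closedNbr (G : SimpleGraph V) (x : V) : (closedNbr G x).card = deg G x + 1 :=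
  Finset.card_insert_of_notMem (notMem_nbrFinset_self G x)

theorem cstar_eq_biUnion_Icc (G : SimpleGraph V) :
    Cstar G = Finset.univ.biUnion fun x => Finset.Icc {x} (closedNbr G x) := by
  ext C
  simp only [Cstar, Finset.mem_filter, Finset.mem_biUnion, Finset.mem_univ, true_and,
    Finset.mem_Icc, Finset.singleton_subset_iff]
  refine exists_congr fun x => ⟨?_, ?_⟩
  · rintro ⟨Y, hY, rfl⟩
    exact ⟨Finset.mem_insert_self x Y, Finset.insert_subset_insert x hY⟩
  · rintro ⟨hx, hC⟩
    exact ⟨C.erase x, Finset.subset_insert_iff.1 hC, (Finset.insert_erase hx).symm⟩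

theorem deg_le_rtd_cstar (G : SimpleGraph V) (x : V) : deg G x ≤ RTD (Cstar G) := by
  have hcenter : ({x} : Finset V) ⊆ closedNbr G x :=
    Finset.singleton_subset_iff.2 (Finset.mem_insert_self x _)
  have hstars : Finset.Icc {x} (closedNbr G x) ⊆ Cstar G := by
    rw [cstar_eq_biUnion_Icc]
    exact Finset.subset_biUnion_of_mem (fun x => Finset.Icc {x} (closedNbr G x))
      (Finset.mem_univ x)
  calc deg G x = (closedNbr G x \ {x}).card := by rw [closedNbr_sdiff_singleton]; rfl
    _ ≤ RTD (Cstar G) := card_sdiff_le_rtd_of_Icc_subset hcenter hstars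

theorem card_le_maxDeg_add_one_of_mem_cstar {G : SimpleGraph V} {C : Finset V}
    (hC : C ∈ Cstar G) : C.card ≤ maxDeg G + 1 := by
  rw [cstar_eq_biUnion_Icc] at hC
  obtain ⟨x, -, hx⟩ := Finset.mem_biUnion.1 hC
  calc C.card ≤ (closedNbr G x).card := Finset.card_le_card (Finset.mem_Icc.1 hx).2
    _ = deg G x + 1 := card_closedNbr G x
    _ ≤ maxDeg G + 1 := Nat.add_le_add_right (Finset.le_sup (Finset.mem_univ x)) 1

end StarClass

/-- For every finite simple graph with at least one vertex,
`Δ(G) ≤ RTD(C_star(G)) ≤ Δ(G) + 1`. -/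
theorem star_rtd_bounds {V : Type*} [Fintype V] [DecidableEq V] [Nonempty V]
    (G : SimpleGraph V) :
    maxDeg G ≤ RTD (Cstar G) ∧ RTD (Cstar G) ≤ maxDeg G + 1 := by
  constructor
  · exact Finset.sup_le fun x _ => deg_le_rtd_cstar G x
  · calc RTD (Cstar G) ≤ (Cstar G).sup Finset.card := rtd_le_sup_card _
      _ ≤ maxDeg G + 1 := Finset.sup_le fun _ hC => card_le_maxDeg_add_one_of_mem_cstar hC
end

section
/- For every connected finite simple graph G with at least two vertices, ℓ(G) ≤ VCD(C_con(G)) ≤ ℓ(G) + 1. -/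
open scoped Classical

/-!
If `T` is a spanning tree of `G`, deleting any set of leaves of `T` leaves a connected set, so the
leaves of `T` are shattered by the connected sets of `G`.

Conversely, let `S` be shattered, fix `u ∈ S`, and let `A` be a maximal connected set that meets `S`
in `{u}` only. For `b ∈ S \ {u}`, a connected set with trace `{u, b}` leaves `A` at some vertex; by
maximality of `A` this vertex lies in `S`, so it is `b`. Hence `S \ {u} ⊆ N(A)`. Now enlarge `A`:
as long as `N[A]` is not everything, some `x ∈ N(A)` has a neighbour outside `N[A]`, and moving `x`
into `A` keeps `A` connected and does not decrease `|N(A)|`. At the end `A` is a connected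
dominating set, and hanging every other vertex on a neighbour in `A` makes all of them leaves.
-/

theorem mem_of_maximal_of_prop_insert {α : Type*} [DecidableEq α] {P : Finset α → Prop}
    {s : Finset α} {a : α} (hs : Maximal P s) (h : P (insert a s)) : a ∈ s :=
  hs.le_of_ge h (Finset.subset_insert a s) (Finset.mem_insert_self a s)

section Shattering

variable {X : Type*} [DecidableEq X] {𝒞 : Finset (Finset X)} {S : Finset X} {n : ℕ}

theorem shatters_iff_finset_shatters : Shatters 𝒞 S ↔ 𝒞.Shatters S := by
  simp only [Shatters, Finset.Shatters, Finset.inter_comm]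

theorem Shatters.card_le_vcd (hS : Shatters 𝒞 S) : S.card ≤ VCD 𝒞 := by
  refine le_csSup ⟨𝒞.vcDim, ?_⟩ ⟨S, hS, rfl⟩
  rintro _ ⟨S', hS', rfl⟩
  exact (shatters_iff_finset_shatters.mp hS').card_le_vcDim

theorem vcd_le (h : ∀ S, Shatters 𝒞 S → S.card ≤ n) : VCD 𝒞 ≤ n := by
  refine csSup_le' ?_
  rintro _ ⟨S, hS, rfl⟩
  exact h S hS

end Shattering

section Connectivity

variable {V : Type*} {G : SimpleGraph V}

theorem exists_adj_mem_notMem_of_preconnected (hG : G.Preconnected) {s : Set V} {u v : V}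
    (hu : u ∈ s) (hv : v ∉ s) : ∃ x ∈ s, ∃ y ∉ s, G.Adj x y := by
  obtain ⟨p⟩ := hG u v
  obtain ⟨d, -, hfst, hsnd⟩ := p.exists_boundary_dart s hu hv
  exact ⟨d.fst, hfst, d.snd, hsnd, d.adj⟩

theorem IsConnSet.exists_adj_of_mem_of_notMem {A C : Finset V} (hC : IsConnSet G C) {u v : V}
    (huC : u ∈ C) (huA : u ∈ A) (hvC : v ∈ C) (hvA : v ∉ A) :
    ∃ x ∈ A, ∃ y ∈ C, y ∉ A ∧ G.Adj x y := by
  obtain ⟨x, hx, y, hy, hxy⟩ := exists_adj_mem_notMem_of_preconnected hC.preconnected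
    (s := Subtype.val ⁻¹' (A : Set V)) (u := ⟨u, huC⟩) (v := ⟨v, hvC⟩) huA hvA
  exact ⟨x, hx, y, y.2, hy, hxy⟩

theorem isConnSet_iff_preconnected_and_nonempty {A : Finset V} :
    IsConnSet G A ↔ (G.induce (A : Set V)).Preconnected ∧ A.Nonempty := by
  rw [IsConnSet, SimpleGraph.connected_iff, Set.nonempty_coe_sort, Finset.coe_nonempty]

theorem IsConnSet.insert_of_adj [DecidableEq V] {A : Finset V} (hA : IsConnSet G A) {x y : V}
    (hx : x ∈ A) (hxy : G.Adj x y) : IsConnSet G (insert y A) := by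
  rw [IsConnSet, Finset.coe_insert, ← Set.union_singleton]
  exact SimpleGraph.connected_induce_union hA.preconnected .of_subsingleton
    (Finset.mem_coe.mpr hx) (Set.mem_singleton y) hxy

theorem mem_ccon_iff_preconnected [Fintype V] [DecidableEq V] {A : Finset V} :
    A ∈ Ccon G ↔ (G.induce (A : Set V)).Preconnected := by
  have hempty : A = ∅ → (G.induce (A : Set V)).Preconnected := by
    rintro rfl ⟨v, hv⟩
    simp at hv
  simp only [Ccon, isConnSet_iff_preconnected_and_nonempty, Finset.mem_filter, Finset.mem_univ,
    true_and]
  grind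

end Connectivity

section Leaves

variable {V : Type*} [Fintype V] {G H T : SimpleGraph V} {v : V}

theorem isLeaf_iff_existsUnique_adj : IsLeaf G v ↔ ∃! w, G.Adj v w := by
  rw [IsLeaf, deg, Finset.card_eq_one, Finset.singleton_iff_unique_mem]
  simp only [Finset.mem_filter, Finset.mem_univ, true_and]

theorem IsLeaf.subsingleton_neighborSet (hv : IsLeaf G v) : (G.neighborSet v).Subsingleton :=
  fun _ ha _ hb => (isLeaf_iff_existsUnique_adj.mp hv).unique ha hb

theorem IsLeaf.of_connected_of_le (hv : IsLeaf H v) (hT : T.Connected) (hTH : T ≤ H) :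
    IsLeaf T v := by
  obtain ⟨w, hvw, hunique⟩ := isLeaf_iff_existsUnique_adj.mp hv
  have : Nontrivial V := ⟨v, w, hvw.ne⟩
  obtain ⟨z, hvz⟩ := hT.preconnected.exists_adj_of_nontrivial v
  exact isLeaf_iff_existsUnique_adj.mpr ⟨z, hvz, fun y hvy =>
    (hunique y (hTH hvy)).trans (hunique z (hTH hvz)).symm⟩

theorem leafCount_le_ell (hH : H.Connected) (hHG : H ≤ G) : leafCount H ≤ ell G := by
  obtain ⟨T, hTH, hT⟩ := hH.exists_isTree_le
  calc
    leafCount H ≤ leafCount T :=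
      Finset.card_le_card (Finset.monotone_filter_right _ fun _ _ hv =>
        hv.of_connected_of_le hT.connected hTH)
    _ ≤ ell G := by
      refine le_csSup ⟨Fintype.card V, ?_⟩ ⟨T, hTH.trans hHG, hT, rfl⟩
      rintro _ ⟨T', -, -, rfl⟩
      exact Finset.card_le_univ _

theorem ell_le {n : ℕ} (h : ∀ T ≤ G, T.IsTree → leafCount T ≤ n) : ell G ≤ n := by
  refine csSup_le' ?_
  rintro _ ⟨T, hTG, hT, rfl⟩
  exact h T hTG hT

theorem shatters_ccon_filter_isLeaf [DecidableEq V] (hH : H.Preconnected) (hHG : H ≤ G) :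
    Shatters (Ccon G) (Finset.univ.filter (IsLeaf H)) := by
  intro S hS
  refine ⟨(Finset.univ.filter (IsLeaf H) \ S)ᶜ, mem_ccon_iff_preconnected.mpr ?_,
    by grind [Finset.mem_compl]⟩
  refine (hH.induce_of_degree_eq_one fun v hv => ?_).mono (SimpleGraph.comap_monotone _ hHG)
  have hleaf : IsLeaf H v := by simp_all
  exact hleaf.subsingleton_neighborSet

theorem ell_le_vcd_ccon [DecidableEq V] : ell G ≤ VCD (Ccon G) :=
  ell_le fun _ hTG hT => (shatters_ccon_filter_isLeaf hT.connected.preconnected hTG).card_le_vcd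

end Leaves

section AttachLeaves

variable {V : Type*} {G : SimpleGraph V} {B : Set V} {f : V → V}

/-- The graph obtained from the induced subgraph `G[B]` by hanging every vertex `v ∉ B` on `f v`
as a pendant vertex. It turns a connected dominating set `B` into a connected spanning subgraph
in which every vertex outside `B` is a leaf. `f` is total, but only its values outside `B`
matter. -/
def attachLeaves (G : SimpleGraph V) (B : Set V) (f : V → V) : SimpleGraph V :=
  (G.induce B).spanningCoe ⊔ .fromRel fun v w => v ∉ B ∧ w = f v

theorem attachLeaves_le (hadj : ∀ v ∉ B, G.Adj v (f v)) : attachLeaves G B f ≤ G := by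
  refine sup_le (G.spanningCoe_induce_le B) ?_
  rintro v w ⟨-, ⟨hv, rfl⟩ | ⟨hw, rfl⟩⟩
  · exact hadj v hv
  · exact (hadj w hw).symm

theorem attachLeaves_adj_iff_of_notMem (hf : ∀ v ∉ B, f v ∈ B) {v w : V} (hv : v ∉ B) :
    (attachLeaves G B f).Adj v w ↔ w = f v := by
  have hne : ∀ u ∉ B, v ≠ f u := fun u hu h => hv (h ▸ hf u hu)
  have not_adj : ¬(G.induce B).spanningCoe.Adj v w := by simp [hv]
  rw [attachLeaves, SimpleGraph.sup_adj, SimpleGraph.fromRel_adj]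
  grind

theorem attachLeaves_connected (hB : (G.induce B).Connected) (hf : ∀ v ∉ B, f v ∈ B) :
    (attachLeaves G B f).Connected := by
  obtain ⟨u⟩ := hB.nonempty
  have reachable_of_mem {v : V} (hv : v ∈ B) : (attachLeaves G B f).Reachable u v :=
    ((hB.preconnected u ⟨v, hv⟩).map (SimpleGraph.Embedding.spanningCoe _).toHom).mono le_sup_left
  refine (SimpleGraph.connected_iff_exists_forall_reachable _).mpr ⟨u, fun v => ?_⟩
  by_cases hv : v ∈ B
  · exact reachable_of_mem hv
  · have hadj := (attachLeaves_adj_iff_of_notMem (G := G) hf hv).mpr rfl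
    exact (reachable_of_mem (hf v hv)).trans hadj.symm.reachable

theorem isLeaf_attachLeaves [Fintype V] (hf : ∀ v ∉ B, f v ∈ B) {v : V} (hv : v ∉ B) :
    IsLeaf (attachLeaves G B f) v := by
  simp only [isLeaf_iff_existsUnique_adj, attachLeaves_adj_iff_of_notMem hf hv, existsUnique_eq]

end AttachLeaves

section Neighborhoods

variable {V : Type*} [Fintype V] [DecidableEq V] {G : SimpleGraph V} {A B S : Finset V} {u x y : V}

theorem mem_closedNbrSet : y ∈ closedNbrSet G A ↔ y ∈ A ∨ ∃ a ∈ A, G.Adj a y := by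
  simp only [closedNbrSet, closedNbr, nbrFinset, Finset.mem_biUnion, Finset.mem_insert,
    Finset.mem_filter, Finset.mem_univ, true_and]
  grind

theorem mem_openNbrSet : y ∈ openNbrSet G A ↔ y ∉ A ∧ ∃ a ∈ A, G.Adj a y := by
  rw [openNbrSet, Finset.mem_sdiff, mem_closedNbrSet]
  tauto

theorem card_openNbrSet_le_card_openNbrSet_insert (hxy : G.Adj x y) (hy : y ∉ closedNbrSet G A) :
    (openNbrSet G A).card ≤ (openNbrSet G (insert x A)).card := by
  have hyN : y ∉ openNbrSet G A := fun h => hy (Finset.sdiff_subset h)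
  have hsub : insert y ((openNbrSet G A).erase x) ⊆ openNbrSet G (insert x A) := by
    grind [mem_openNbrSet, mem_closedNbrSet, hxy.ne]
  calc
    (openNbrSet G A).card ≤ ((openNbrSet G A).erase x).card + 1 :=
      tsub_le_iff_right.mp Finset.pred_card_le_card_erase
    _ = (insert y ((openNbrSet G A).erase x)).card :=
      (Finset.card_insert_of_notMem fun h => hyN (Finset.mem_of_mem_erase h)).symm
    _ ≤ (openNbrSet G (insert x A)).card := Finset.card_le_card hsub

theorem exists_openNbrSet_adj_notMem_closedNbrSet (hG : G.Preconnected) (hA : A.Nonempty)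
    (hdom : closedNbrSet G A ≠ Finset.univ) :
    ∃ x ∈ openNbrSet G A, ∃ y ∉ closedNbrSet G A, G.Adj x y := by
  obtain ⟨u, hu⟩ := hA
  obtain ⟨w, hw⟩ : ∃ w, w ∉ closedNbrSet G A := by
    simpa [Finset.eq_univ_iff_forall] using hdom
  obtain ⟨x, hx, y, hy, hxy⟩ := exists_adj_mem_notMem_of_preconnected hG (s := closedNbrSet G A)
    (Finset.mem_coe.mpr (mem_closedNbrSet.mpr (.inl hu))) (Finset.mem_coe.not.mpr hw)
  have hxA : x ∉ A := fun h => hy (Finset.mem_coe.mpr (mem_closedNbrSet.mpr (.inr ⟨x, h, hxy⟩)))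
  exact ⟨x, Finset.mem_sdiff.mpr ⟨hx, hxA⟩, y, hy, hxy⟩

theorem IsConnSet.exists_closedNbrSet_eq_univ (hG : G.Preconnected) (hA : IsConnSet G A) :
    ∃ B, IsConnSet G B ∧ closedNbrSet G B = Finset.univ ∧
      (openNbrSet G A).card ≤ (openNbrSet G B).card := by
  obtain ⟨B, hmax⟩ := exists_maximal_of_wellFoundedGT
    (fun B => IsConnSet G B ∧ (openNbrSet G A).card ≤ (openNbrSet G B).card) ⟨A, hA, le_rfl⟩
  obtain ⟨hB, hcard⟩ := hmax.prop
  refine ⟨B, hB, ?_, hcard⟩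
  by_contra hdom
  obtain ⟨x, hx, y, hy, hxy⟩ := exists_openNbrSet_adj_notMem_closedNbrSet hG
    (isConnSet_iff_preconnected_and_nonempty.mp hB).2 hdom
  obtain ⟨hxB, a, ha, hax⟩ := mem_openNbrSet.mp hx
  exact hxB (mem_of_maximal_of_prop_insert hmax ⟨hB.insert_of_adj ha hax,
    hcard.trans (card_openNbrSet_le_card_openNbrSet_insert hxy hy)⟩)

theorem IsConnSet.card_compl_le_ell (hB : IsConnSet G B) (hdom : closedNbrSet G B = Finset.univ) :
    Bᶜ.card ≤ ell G := by
  have exists_adj : ∀ v ∉ B, ∃ b ∈ B, G.Adj v b := fun v hv => by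
    have hv' : v ∈ closedNbrSet G B := hdom ▸ Finset.mem_univ v
    obtain ⟨b, hb, hbv⟩ := (mem_closedNbrSet.mp hv').resolve_left hv
    exact ⟨b, hb, hbv.symm⟩
  choose! f hf hadj using exists_adj
  calc
    Bᶜ.card ≤ leafCount (attachLeaves G B f) := Finset.card_le_card fun v hv =>
      Finset.mem_filter.mpr ⟨Finset.mem_univ v, isLeaf_attachLeaves hf (Finset.mem_compl.mp hv)⟩
    _ ≤ ell G := leafCount_le_ell (attachLeaves_connected hB hf) (attachLeaves_le hadj)

theorem IsConnSet.card_openNbrSet_le_ell (hG : G.Preconnected) (hA : IsConnSet G A) :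
    (openNbrSet G A).card ≤ ell G := by
  obtain ⟨B, hB, hdom, hcard⟩ := hA.exists_closedNbrSet_eq_univ hG
  calc
    (openNbrSet G A).card ≤ (openNbrSet G B).card := hcard
    _ = Bᶜ.card := by rw [openNbrSet, hdom, Finset.compl_eq_univ_sdiff]
    _ ≤ ell G := hB.card_compl_le_ell hdom

theorem Shatters.exists_isConnSet_inter_eq (hS : Shatters (Ccon G) S) {S' : Finset V}
    (hS' : S' ⊆ S) (hne : S'.Nonempty) : ∃ C, IsConnSet G C ∧ C ∩ S = S' := by
  obtain ⟨C, hC, rfl⟩ := hS S' hS'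
  have hCne : C.Nonempty := hne.mono Finset.inter_subset_left
  exact ⟨C, isConnSet_iff_preconnected_and_nonempty.mpr
    ⟨mem_ccon_iff_preconnected.mp hC, hCne⟩, rfl⟩

theorem Shatters.erase_subset_openNbrSet_of_maximal (hS : Shatters (Ccon G) S)
    (hA : Maximal (fun A => IsConnSet G A ∧ A ∩ S = {u}) A) : S.erase u ⊆ openNbrSet G A := by
  obtain ⟨hAconn, hAS⟩ := hA.prop
  have mem_A_and_mem_S_iff (z : V) : z ∈ A ∧ z ∈ S ↔ z = u := by
    rw [← Finset.mem_inter, hAS, Finset.mem_singleton]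
  obtain ⟨huA, huS⟩ := (mem_A_and_mem_S_iff u).mpr rfl
  intro b hb
  obtain ⟨hbu, hbS⟩ := Finset.mem_erase.mp hb
  have hbA : b ∉ A := fun h => hbu ((mem_A_and_mem_S_iff b).mp ⟨h, hbS⟩)
  obtain ⟨C, hC, hCS⟩ := hS.exists_isConnSet_inter_eq
    (Finset.insert_subset huS (Finset.singleton_subset_iff.mpr hbS)) (Finset.insert_nonempty u {b})
  have mem_C_and_mem_S_iff (z : V) : z ∈ C ∧ z ∈ S ↔ z = u ∨ z = b := by
    rw [← Finset.mem_inter, hCS, Finset.mem_insert, Finset.mem_singleton]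
  obtain ⟨x, hx, y, hyC, hyA, hxy⟩ := hC.exists_adj_of_mem_of_notMem
    ((mem_C_and_mem_S_iff u).mpr (.inl rfl)).1 huA ((mem_C_and_mem_S_iff b).mpr (.inr rfl)).1 hbA
  have hyS : y ∈ S := by
    by_contra hyS
    exact hyA (mem_of_maximal_of_prop_insert hA
      ⟨hAconn.insert_of_adj hx hxy, by rw [Finset.insert_inter_of_notMem hyS, hAS]⟩)
  have hyb : y = b := ((mem_C_and_mem_S_iff y).mp ⟨hyC, hyS⟩).resolve_left fun h => hyA (h ▸ huA)
  exact mem_openNbrSet.mpr ⟨hbA, x, hx, hyb ▸ hxy⟩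

theorem Shatters.card_le_ell_add_one (hG : G.Preconnected) (hS : Shatters (Ccon G) S) :
    S.card ≤ ell G + 1 := by
  obtain rfl | ⟨u, hu⟩ := S.eq_empty_or_nonempty
  · simp
  obtain ⟨A, hA⟩ := exists_maximal_of_wellFoundedGT _
    (hS.exists_isConnSet_inter_eq (Finset.singleton_subset_iff.mpr hu)
      (Finset.singleton_nonempty u))
  calc
    S.card = (S.erase u).card + 1 := (Finset.card_erase_add_one hu).symm
    _ ≤ (openNbrSet G A).card + 1 := by
      gcongr
      exact hS.erase_subset_openNbrSet_of_maximal hA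
    _ ≤ ell G + 1 := by
      gcongr
      exact hA.prop.1.card_openNbrSet_le_ell hG

end Neighborhoods

/-- For every connected finite simple graph `G` with at least two
vertices, `ℓ(G) ≤ VCD(C_con(G)) ≤ ℓ(G) + 1`. -/
theorem con_vcd_bounds {V : Type*} [Fintype V] [DecidableEq V]
    (G : SimpleGraph V) (hconn : G.Connected) (hcard : 2 ≤ Fintype.card V) :
    ell G ≤ VCD (Ccon G) ∧ VCD (Ccon G) ≤ ell G + 1 :=
  ⟨ell_le_vcd_ccon, vcd_le fun _ hS => hS.card_le_ell_add_one hconn.preconnected⟩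
end
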